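/- Let φ₁, …, φ_K be unit vectors in ℂ^d and p₁, …, p_K nonnegative weights summing to 1, and consider the ensemble of pure states E_K = {(pᵢ, |φᵢ⟩⟨φᵢ|)}. Then the Holevo quantity χ(E_K) = S(Σᵢ pᵢ |φᵢ⟩⟨φᵢ|) is bounded above by the entropy of the K×K positive semidefinite matrix C_F with entries (C_F)ᵢⱼ = √(pᵢ pⱼ) |⟨φᵢ, φⱼ⟩|², that is, χ(E_K) ≤ S(C_F). -/

import Mathlib

open scoped InnerProductSpace Classical

open Matrix

/-- Von Neumann entropy of a (Hermitian) matrix via its eigenvalues, with natural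
logarithm and the convention `0 ln 0 = 0`. -/
noncomputable def vnEntropy {𝕜 : Type*} [RCLike 𝕜] {n : Type*} [Fintype n] [DecidableEq n]
    (σ : Matrix n n 𝕜) : ℝ :=
  if h : σ.IsHermitian then -∑ i, (h.eigenvalues i) * Real.log (h.eigenvalues i) else 0

lemma vnEntropy_eq_roots {𝕜 : Type*} [RCLike 𝕜] {n : Type*} [Fintype n] [DecidableEq n]
    (σ : Matrix n n 𝕜) (h : σ.IsHermitian) :
    vnEntropy σ = (σ.charpoly.roots.map (fun z => Real.negMulLog (RCLike.re z))).sum := by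
  rw [vnEntropy, dif_pos h, h.roots_charpoly_eq_eigenvalues]
  rw [Multiset.map_map, ← Finset.sum_neg_distrib]
  refine Finset.sum_congr rfl fun i _ => ?_
  simp [Real.negMulLog]

lemma vnEntropy_mul_comm {m n : Type*} [Fintype n] [DecidableEq n] [Fintype m] [DecidableEq m]
    (B : Matrix m n ℂ) : vnEntropy (B * Bᴴ) = vnEntropy (Bᴴ * B) := by
  rw [vnEntropy_eq_roots _ (isHermitian_mul_conjTranspose_self B),
    vnEntropy_eq_roots _ (isHermitian_conjTranspose_mul_self B)]
  have h := congrArg (fun P => (P.roots.map (fun z => Real.negMulLog (RCLike.re z))).sum)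
    (Matrix.charpoly_mul_comm' B Bᴴ)
  have h1 := (Matrix.charpoly_monic (B * Bᴴ)).ne_zero
  have h2 := (Matrix.charpoly_monic (Bᴴ * B)).ne_zero
  rw [Polynomial.roots_mul (mul_ne_zero (pow_ne_zero _ Polynomial.X_ne_zero) h1),
    Polynomial.roots_mul (mul_ne_zero (pow_ne_zero _ Polynomial.X_ne_zero) h2)] at h
  simpa [Multiset.map_nsmul, Multiset.sum_nsmul] using h

/-- overlap coefficient -/
noncomputable def Dcoef {d K : ℕ} (φ : Fin K → Fin d → ℂ) (W U : Matrix (Fin K) (Fin K) ℂ)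
    (a k : Fin K) : ℝ := ∑ x, Complex.normSq (∑ i, W i a * U i k * φ i x)

lemma Dcoef_nonneg {d K : ℕ} (φ : Fin K → Fin d → ℂ) (W U : Matrix (Fin K) (Fin K) ℂ)
    (a k : Fin K) : 0 ≤ Dcoef φ W U a k := Finset.sum_nonneg fun _ _ => Complex.normSq_nonneg _

lemma Dcoef_comm {d K : ℕ} (φ : Fin K → Fin d → ℂ) (W U : Matrix (Fin K) (Fin K) ℂ)
    (a k : Fin K) : Dcoef φ W U a k = Dcoef φ U W k a := by
  simp only [Dcoef, mul_comm (W _ _)]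

lemma Dcoef_expand {d K : ℕ} (φ : Fin K → Fin d → ℂ) (W U : Matrix (Fin K) (Fin K) ℂ)
    (a k : Fin K) : (Dcoef φ W U a k : ℂ) = ∑ i, ∑ j, (W i a * star (W j a)) *
      (U i k * star (U j k)) * ∑ x, φ i x * star (φ j x) := by
  simp only [Dcoef, Complex.ofReal_sum, Complex.normSq_eq_conj_mul_self, map_sum, map_mul]
  simp only [Finset.mul_sum, Finset.sum_mul]
  conv_rhs => enter [2, i]; rw [Finset.sum_comm]
  conv_rhs => rw [Finset.sum_comm]
  refine Finset.sum_congr rfl fun x _ => ?_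
  refine Finset.sum_congr rfl fun i _ => Finset.sum_congr rfl fun j _ => ?_
  simp only [← starRingEnd_apply]
  ring

lemma Dcoef_sum {d K : ℕ} (φ : Fin K → Fin d → ℂ) (W U : Matrix (Fin K) (Fin K) ℂ)
    (hφ : ∀ i, ∑ x, φ i x * star (φ i x) = 1) (hW : Wᴴ * W = 1) (hU : U * Uᴴ = 1)
    (a : Fin K) : ∑ k, Dcoef φ W U a k = 1 := by
  have key : ((∑ k, Dcoef φ W U a k : ℝ) : ℂ) = 1 := by
    have hU' : ∀ i j, ∑ k, U i k * star (U j k) = if i = j then 1 else 0 := fun i j => by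
      have := congrFun (congrFun hU i) j
      simpa [Matrix.mul_apply, Matrix.one_apply] using this
    have hW' : ∑ i, W i a * star (W i a) = 1 := by
      have := congrFun (congrFun hW a) a
      simpa [Matrix.mul_apply, mul_comm] using this
    simp only [Complex.ofReal_sum, Dcoef_expand]
    rw [Finset.sum_comm]
    conv_lhs => enter [2, i]; rw [Finset.sum_comm]
    simp only [← Finset.sum_mul, ← Finset.mul_sum, hU']
    simp only [mul_ite, ite_mul, mul_one, mul_zero, zero_mul, Finset.sum_ite_eq, Finset.mem_univ,
      if_true, hφ]
    exact hW'
  exact_mod_cast key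

lemma concave_step {K : ℕ} (D : Fin K → Fin K → ℝ) (h0 : ∀ a k, 0 ≤ D a k)
    (h1 : ∀ a, ∑ k, D a k = 1) (h2 : ∀ k, ∑ a, D a k = 1) (l m : Fin K → ℝ)
    (hl : ∀ k, 0 ≤ l k) (hm : ∀ a, m a = ∑ k, D a k * l k) :
    ∑ k, Real.negMulLog (l k) ≤ ∑ a, Real.negMulLog (m a) := by
  calc ∑ k, Real.negMulLog (l k) = ∑ a, ∑ k, D a k * Real.negMulLog (l k) := by
        rw [Finset.sum_comm]; simp [← Finset.sum_mul, h2]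
    _ ≤ _ := Finset.sum_le_sum fun a _ => by
        have := Real.concaveOn_negMulLog.le_map_sum (t := Finset.univ) (w := D a) (p := l)
          (fun k _ => h0 a k) (h1 a) (fun k _ => hl k)
        simpa [hm] using this

lemma vnEntropy_eq_neg {𝕜 : Type*} [RCLike 𝕜] {n : Type*} [Fintype n] [DecidableEq n]
    (σ : Matrix n n 𝕜) (h : σ.IsHermitian) :
    vnEntropy σ = ∑ i, Real.negMulLog (h.eigenvalues i) := by
  rw [vnEntropy, dif_pos h]; simp [Real.negMulLog]

open scoped ComplexOrder in
lemma hadamard_step {d K : ℕ} (φ : Fin K → Fin d → ℂ)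
    (hφ : ∀ i, ∑ x, φ i x * star (φ i x) = 1) (G : Matrix (Fin K) (Fin K) ℂ)
    (hG : G.PosSemidef) (C : Matrix (Fin K) (Fin K) ℝ) (hC : C.IsHermitian)
    (hGC : ∀ i j, (C i j : ℂ) = G i j * ∑ x, φ i x * star (φ j x)) :
    vnEntropy G ≤ vnEntropy C := by
  rw [vnEntropy_eq_neg G hG.1, vnEntropy_eq_neg C hC]
  set U : Matrix (Fin K) (Fin K) ℂ := (hG.1.eigenvectorUnitary : Matrix (Fin K) (Fin K) ℂ) with hUd
  set V : Matrix (Fin K) (Fin K) ℝ := (hC.eigenvectorUnitary : Matrix (Fin K) (Fin K) ℝ) with hVd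
  set W : Matrix (Fin K) (Fin K) ℂ := V.map Complex.ofReal with hWd
  have hU1 : Uᴴ * U = 1 := Unitary.coe_star_mul_self hG.1.eigenvectorUnitary
  have hU2 : U * Uᴴ = 1 := Unitary.coe_mul_star_self hG.1.eigenvectorUnitary
  have hV1 : Vᴴ * V = 1 := Unitary.coe_star_mul_self hC.eigenvectorUnitary
  have hV2 : V * Vᴴ = 1 := Unitary.coe_mul_star_self hC.eigenvectorUnitary
  have hWs : Wᴴ = Vᴴ.map Complex.ofReal := by ext i j; simp [hWd]
  have hW1 : Wᴴ * W = 1 := by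
    rw [hWs, hWd]
    have := congrArg (fun M => M.map Complex.ofRealHom) hV1
    simp only [Matrix.map_mul] at this
    rw [Matrix.map_one _ (map_zero _) (map_one _)] at this
    exact this
  have hW2 : W * Wᴴ = 1 := mul_eq_one_comm.mp hW1
  refine concave_step (Dcoef φ W U) (Dcoef_nonneg _ _ _) (Dcoef_sum φ W U hφ hW1 hU2)
    (fun k => ?_) _ _ hG.eigenvalues_nonneg (fun a => ?_)
  · simp only [Dcoef_comm φ W U]
    exact Dcoef_sum φ U W hφ hU1 hW2 k
  · have hGe : ∀ i j, G i j = ∑ k, U i k * hG.1.eigenvalues k * star (U j k) := fun i j => by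
      have h := congrFun (congrFun hG.1.spectral_theorem i) j
      rw [h, Unitary.conjStarAlgAut_apply]
      simp [Matrix.mul_apply, Matrix.diagonal_apply, hUd]
    have hCe : hC.eigenvalues a = ∑ i, ∑ j, V i a * C i j * V j a := by
      rw [hC.eigenvalues_eq]
      simp [dotProduct, Matrix.mulVec, Finset.mul_sum, hVd, mul_assoc,
        Matrix.IsHermitian.eigenvectorUnitary_apply]
    have : (hC.eigenvalues a : ℂ) = ((∑ k, Dcoef φ W U a k * hG.1.eigenvalues k : ℝ) : ℂ) := by
      rw [hCe]
      push_cast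
      simp only [hGC, Dcoef_expand, Finset.sum_mul]
      rw [Finset.sum_comm]
      conv_rhs => rw [Finset.sum_comm]
      conv_rhs => enter [2, i]; rw [Finset.sum_comm]
      rw [Finset.sum_comm]
      refine Finset.sum_congr rfl fun i _ => Finset.sum_congr rfl fun j _ => ?_
      rw [hGe i j, Finset.sum_mul, Finset.mul_sum, Finset.sum_mul]
      refine Finset.sum_congr rfl fun k _ => ?_
      have : star (W j a) = V j a := by simp [hWd]
      rw [this]
      simp only [hWd, Matrix.map_apply]
      ring
    exact_mod_cast this

open scoped ComplexOrder in
lemma hadamard_step' {d K : ℕ} (φ : Fin K → Fin d → ℂ)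
    (hφ : ∀ i, ∑ x, φ i x * star (φ i x) = 1) (B : Matrix (Fin d) (Fin K) ℂ)
    (C : Matrix (Fin K) (Fin K) ℝ) (hC : C.IsHermitian)
    (hGC : ∀ i j, (C i j : ℂ) = (Bᴴ * B) i j * ∑ x, φ i x * star (φ j x)) :
    vnEntropy (Bᴴ * B) ≤ vnEntropy C :=
  hadamard_step φ hφ _ (Matrix.posSemidef_conjTranspose_mul_self B) C hC hGC

/-- For an ensemble of pure states the Holevo quantity `S(Σᵢ pᵢ |φᵢ⟩⟨φᵢ|)` is bounded
above by the entropy of the matrix `(C_F)ᵢⱼ = √(pᵢpⱼ)|⟨φᵢ,φⱼ⟩|²`. -/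
theorem pureState_holevo_le_entropy_fidelity_matrix {d K : ℕ}
    (φ : Fin K → EuclideanSpace ℂ (Fin d)) (hφ : ∀ i, ‖φ i‖ = 1)
    (p : Fin K → ℝ) (hp : ∀ i, 0 ≤ p i) (hsum : ∑ i, p i = 1) :
    vnEntropy (∑ i, (p i : ℂ) • Matrix.vecMulVec (φ i) (star (φ i))) ≤
      vnEntropy (Matrix.of fun i j : Fin K =>
        Real.sqrt (p i * p j) * ‖⟪φ i, φ j⟫_ℂ‖ ^ 2) := by
  let B : Matrix (Fin d) (Fin K) ℂ := Matrix.of fun x i => (Real.sqrt (p i) : ℂ) * φ i x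
  have hB : (∑ i, (p i : ℂ) • Matrix.vecMulVec (φ i) (star (φ i))) = B * Bᴴ := by
    ext x y
    simp only [Matrix.sum_apply, Matrix.mul_apply, B]
    refine Finset.sum_congr rfl fun i _ => ?_
    have : (p i : ℂ) = (Real.sqrt (p i) : ℂ) * Real.sqrt (p i) := by
      rw [← Complex.ofReal_mul, Real.mul_self_sqrt (hp i)]
    simp [Matrix.vecMulVec_apply]
    rw [this]; ring
  have hin : ∀ i j, ⟪φ i, φ j⟫_ℂ = ∑ x, φ j x * star (φ i x) := fun i j => by
    simp [PiLp.inner_apply]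
  rw [hB, vnEntropy_mul_comm]
  refine hadamard_step' (fun i x => φ i x) (fun i => ?_) B
    _ ?_ (fun i j => ?_)
  · rw [← hin, inner_self_eq_norm_sq_to_K, hφ]; simp
  · ext i j
    simp [mul_comm (p i), norm_inner_symm (φ i)]
  · rw [← hin]
    have : (Bᴴ * B) i j = (Real.sqrt (p i * p j) : ℂ) * ⟪φ i, φ j⟫_ℂ := by
      rw [hin, Real.sqrt_mul (hp i), Matrix.mul_apply, Finset.mul_sum]
      refine Finset.sum_congr rfl fun x _ => ?_
      simp [B]; ring
    rw [this, ← inner_conj_symm (φ j) (φ i), mul_assoc, Complex.mul_conj, Complex.normSq_eq_norm_sq]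
    simp
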